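/- Let L be a first-order language extending the language of rings, and let M be an L-structure whose universe F, equipped with the interpretations of the ring symbols, is a field. Assume Th(M) has finite burden. Then for every definable infinite set X ⊆ F, the field F is a finite extension of the subfield of F generated by X; that is, F is finite-dimensional as a vector space over the subfield generated by X. -/

import Mathlib

/- Common model-theoretic definitions. -/

open FirstOrder Set

universe u v w

/-- An inp-pattern of depth `κ` in `nvars` free variables witnessed in the `L`-structure `N`:
formulas `φ α (x̄; ȳ_α)` (with `m α` parameter variables), positive integers `k α`, and
parameter tuples `b α i` such that each row is `k α`-inconsistent (no tuple of `N` realizes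
`φ α (x̄; b α i)` for `k α` distinct values of `i`), while every path is finitely consistent. -/
def IsInpPattern (L : FirstOrder.Language.{u, v}) (N : Type*) [L.Structure N]
    (κ : Type*) (nvars : ℕ) : Prop :=
  ∃ (m : κ → ℕ) (φ : ∀ α : κ, L.Formula (Fin nvars ⊕ Fin (m α)))
    (k : κ → ℕ) (b : ∀ α : κ, ℕ → Fin (m α) → N),
    (∀ α, 1 ≤ k α) ∧
    (∀ α : κ, ¬ ∃ (x : Fin nvars → N) (s : Finset ℕ),
        k α ≤ s.card ∧ ∀ i ∈ s, (φ α).Realize (Sum.elim x (b α i))) ∧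
    (∀ (η : κ → ℕ) (S : Finset κ), ∃ x : Fin nvars → N,
        ∀ α ∈ S, (φ α).Realize (Sum.elim x (b α (η α))))

/-- `Th(M)` has burden at least `n`: some model of `Th(M)` witnesses an inp-pattern of
depth `n` in a single variable. -/
def HasBurdenAtLeast (L : FirstOrder.Language.{u, v}) (M : Type w) [L.Structure M]
    (n : ℕ) : Prop :=
  ∃ N : FirstOrder.Language.Theory.ModelType.{u, v, max u v w} (L.completeTheory M),
    IsInpPattern L N (Fin n) 1

/-- `Th(M)` has finite burden: for some `n`, no model of `Th(M)` witnesses an inp-pattern of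
depth `n + 1` in a single variable. -/
def HasFiniteBurden (L : FirstOrder.Language.{u, v}) (M : Type w) [L.Structure M] : Prop :=
  ∃ n : ℕ, ¬ HasBurdenAtLeast L M (n + 1)

/-- `Th(M)` is strong: no model of `Th(M)` witnesses an inp-pattern of depth `ω` in any
finite tuple of variables. -/
def IsStrong (L : FirstOrder.Language.{u, v}) (M : Type w) [L.Structure M] : Prop :=
  ∀ (N : FirstOrder.Language.Theory.ModelType.{u, v, max u v w} (L.completeTheory M))
    (nvars : ℕ), ¬ IsInpPattern L N ℕ nvars

/-- A set `D` in a linear order is discrete if each of its points is isolated in it. -/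
def DiscreteIn {R : Type*} [LinearOrder R] (D : Set R) : Prop :=
  ∀ x ∈ D, ∃ a b : R, a < x ∧ x < b ∧ Set.Ioo a b ∩ D = {x}

/-- `M` is definably complete: every nonempty definable subset of `R` that is bounded above
has a least upper bound. -/
def DefinablyComplete (L : FirstOrder.Language.{u, v}) (R : Type w)
    [LinearOrder R] [L.Structure R] : Prop :=
  ∀ X : Set R, (Set.univ : Set R).Definable₁ L X → X.Nonempty → BddAbove X →
    ∃ a : R, IsLUB X a

/-- The graph of `f` is definable with parameters. -/
def DefGraph (L : FirstOrder.Language.{u, v}) {F : Type w} [L.Structure F] {ι : Type}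
    (f : (ι → F) → F) : Prop :=
  (Set.univ : Set F).Definable L {v : ι ⊕ Fin 1 → F | f (v ∘ Sum.inl) = v (Sum.inr 0)}

theorem DefGraph.coord (L : FirstOrder.Language.{u, v}) {F : Type w} [L.Structure F] {ι : Type}
    (i : ι) : DefGraph L (fun v : ι → F => v i) := by
  have h := (Set.Definable.diagonal L (Set.univ : Set F)).preimage_comp
    (![Sum.inl i, Sum.inr 0] : Fin 2 → ι ⊕ Fin 1)
  unfold DefGraph
  convert! h using 1

theorem DefGraph.const (L : FirstOrder.Language.{u, v}) {F : Type w} [L.Structure F] {ι : Type}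
    (a : F) : DefGraph L (fun _ : ι → F => a) := by
  have h := (Set.Definable.singleton_of_mem L (Set.mem_univ a)).preimage_comp
    (![Sum.inr 0] : Fin 1 → ι ⊕ Fin 1)
  unfold DefGraph
  convert! h using 1
  ext v
  simp [eq_comm]

theorem DefGraph.comp₂ {L : FirstOrder.Language.{u, v}} {F : Type w} [L.Structure F] {ι : Type}
    (op : F → F → F)
    (hop : (∅ : Set F).Definable L {v : Fin 3 → F | op (v 0) (v 1) = v 2})
    {f g : (ι → F) → F} (hf : DefGraph L f) (hg : DefGraph L g) :
    DefGraph L (fun v => op (f v) (g v)) := by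
  have h1 := hf.preimage_comp
    (Sum.elim (fun i => Sum.inl (Sum.inl i)) (fun _ => Sum.inr 0) : _ → (ι ⊕ Fin 1) ⊕ Fin 2)
  have h2 := hg.preimage_comp
    (Sum.elim (fun i => Sum.inl (Sum.inl i)) (fun _ => Sum.inr 1) : _ → (ι ⊕ Fin 1) ⊕ Fin 2)
  have h3 := (hop.mono (Set.empty_subset Set.univ)).preimage_comp
    (![Sum.inr 0, Sum.inr 1, Sum.inl (Sum.inr 0)] : Fin 3 → (ι ⊕ Fin 1) ⊕ Fin 2)
  have h := ((h1.inter h2).inter h3).exists_of_finite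
  unfold DefGraph
  convert! h using 1
  ext v
  constructor
  · intro hv
    exact ⟨![f (v ∘ Sum.inl), g (v ∘ Sum.inl)], ⟨rfl, rfl⟩, hv⟩
  · rintro ⟨u, ⟨hu1, hu2⟩, hu3⟩
    change f (v ∘ Sum.inl) = u 0 at hu1
    change g (v ∘ Sum.inl) = u 1 at hu2
    change op (u 0) (u 1) = v (Sum.inr 0) at hu3
    change op (f (v ∘ Sum.inl)) (g (v ∘ Sum.inl)) = v (Sum.inr 0)
    rw [hu1, hu2, hu3]

theorem DefGraph.sum {L : FirstOrder.Language.{u, v}} {F : Type w} [Field F] [L.Structure F]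
    {ι κ : Type}
    (hadd : (∅ : Set F).Definable L {v : Fin 3 → F | v 0 + v 1 = v 2})
    (f : κ → (ι → F) → F) (hf : ∀ k, DefGraph L (f k)) (s : Finset κ) :
    DefGraph L (fun v => ∑ k ∈ s, f k v) := by
  classical
  induction s using Finset.induction_on with
  | empty => simpa using DefGraph.const L (0 : F)
  | insert a s ha ih =>
    simp only [Finset.sum_insert ha]
    exact DefGraph.comp₂ (· + ·) hadd (hf a) ih

/-- The sets occurring in the pattern are definable. -/
theorem definable_row {L : FirstOrder.Language.{u, v}} {F : Type w} [Field F] [L.Structure F]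
    (hadd : (∅ : Set F).Definable L {v : Fin 3 → F | v 0 + v 1 = v 2})
    (hmul : (∅ : Set F).Definable L {v : Fin 3 → F | v 0 * v 1 = v 2})
    (X : Set F) (hX : (Set.univ : Set F).Definable₁ L X) (n : ℕ) (a : Fin n → F) (α : Fin n) :
    (Set.univ : Set F).Definable L {v : Fin 2 → F | ∃ x : Fin n → F,
      (∀ i, x i ∈ X) ∧ ∑ i, a i * x i = v 0 ∧ x α = v 1} := by
  have hs : DefGraph L (fun v : Fin n → F => ∑ i, a i * v i) :=
    DefGraph.sum hadd (fun i v => a i * v i)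
      (fun i => DefGraph.comp₂ (· * ·) hmul (DefGraph.const L (a i)) (DefGraph.coord L i)) _
  have h1 := hs.preimage_comp
    (Sum.elim (fun i => Sum.inr i) (fun _ => Sum.inl 0) : _ → Fin 2 ⊕ Fin n)
  have h2 := (DefGraph.coord L (F := F) α).preimage_comp
    (Sum.elim (fun i => Sum.inr i) (fun _ => Sum.inl 1) : _ → Fin 2 ⊕ Fin n)
  have h3 := Set.definable_iInter_of_finite (fun i : Fin n => hX.preimage_comp
    (fun _ => Sum.inr i : Fin 1 → Fin 2 ⊕ Fin n))
  have h := ((h3.inter h1).inter h2).exists_of_finite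
  convert! h using 1
  ext v
  constructor
  · rintro ⟨x, hx, h1, h2⟩
    exact ⟨x, ⟨Set.mem_iInter.2 hx, h1⟩, h2⟩
  · rintro ⟨x, ⟨hx, h1⟩, h2⟩
    exact ⟨x, Set.mem_iInter.1 hx, h1, h2⟩

/-- A binary relation definable with parameters is given by a formula in the form needed. -/
theorem exists_formula_of_definable {L : FirstOrder.Language.{u, v}} {F : Type w} [L.Structure F]
    (D : Set (Fin 2 → F)) (hD : (Set.univ : Set F).Definable L D) :
    ∃ (m : ℕ) (φ : L.Formula (Fin 1 ⊕ Fin m)) (b : F → Fin m → F),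
      ∀ (x : Fin 1 → F) (c : F), φ.Realize (Sum.elim x (b c)) ↔ ![x 0, c] ∈ D := by
  obtain ⟨A, -, hA⟩ := Set.definable_iff_finitely_definable.1 hD
  obtain ⟨ψ, rfl⟩ := Set.definable_iff_exists_formula_sum.1 hA
  let e : A ≃ Fin A.card := A.equivFin
  let r : (A : Set F) ⊕ Fin 2 → Fin 1 ⊕ Fin (A.card + 1) :=
    Sum.elim (fun p => Sum.inr (e p).succ) ![Sum.inl 0, Sum.inr 0]
  refine ⟨A.card + 1, ψ.relabel r, fun c => Fin.cons c (fun i => (e.symm i : F)), ?_⟩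
  intro x c
  rw [FirstOrder.Language.Formula.realize_relabel]
  have : (Sum.elim x (Fin.cons c (fun i => (e.symm i : F)) : Fin (A.card + 1) → F)) ∘ r
      = Sum.elim (fun p : (A : Set F) => (p : F)) ![x 0, c] := by
    funext p
    rcases p with p | p
    · simp [r]
    · fin_cases p <;> simp [r]
  rw [this]
  rfl

theorem IsInpPattern.of_equiv {L : FirstOrder.Language.{u, v}} {M : Type*} {N : Type*}
    [L.Structure M] [L.Structure N] (e : M ≃[L] N) {κ : Type*} {nvars : ℕ}
    (h : IsInpPattern L M κ nvars) : IsInpPattern L N κ nvars := by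
  obtain ⟨m, φ, k, b, hk, hrow, hpath⟩ := h
  have key : ∀ α (x : Fin nvars → M) i,
      (φ α).Realize (Sum.elim (e ∘ x) (e ∘ b α i)) ↔ (φ α).Realize (Sum.elim x (b α i)) := by
    intro α x i
    rw [← Sum.comp_elim]
    exact FirstOrder.Language.StrongHomClass.realize_formula e (φ α)
  refine ⟨m, φ, k, fun α i => e ∘ b α i, hk, ?_, ?_⟩
  · rintro α ⟨x, s, hs, hx⟩
    refine hrow α ⟨e.symm ∘ x, s, hs, fun i hi => ?_⟩
    rw [← key]
    convert hx i hi using 2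
    funext j
    simp
  · intro η S
    obtain ⟨x, hx⟩ := hpath η S
    exact ⟨e ∘ x, fun α hα => (key _ _ _).2 (hx α hα)⟩

/-- If `L` extends the language of rings, `F` is a field which is an
`L`-structure interpreting the ring symbols standardly (so their graphs are `∅`-definable),
and `Th(F)` has finite burden, then for every definable infinite `X ⊆ F`, the field `F` is
finite-dimensional over the subfield generated by `X`. -/
theorem statement_0 {L : FirstOrder.Language.{u, v}} {F : Type w} [Field F] [L.Structure F]
    (hzero : (∅ : Set F).Definable₁ L {x : F | x = 0})
    (hone : (∅ : Set F).Definable₁ L {x : F | x = 1})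
    (hneg : (∅ : Set F).Definable L {v : Fin 2 → F | v 1 = -v 0})
    (hadd : (∅ : Set F).Definable L {v : Fin 3 → F | v 0 + v 1 = v 2})
    (hmul : (∅ : Set F).Definable L {v : Fin 3 → F | v 0 * v 1 = v 2})
    (hfb : HasFiniteBurden L F)
    (X : Set F) (hX : (Set.univ : Set F).Definable₁ L X) (hXinf : X.Infinite) :
    FiniteDimensional (Subfield.closure X) F := by
  obtain ⟨n, hn⟩ := hfb
  by_contra hfin
  apply hn
  set K := Subfield.closure X with hK
  -- an infinite linearly independent family
  obtain ⟨a, ha⟩ : ∃ a : Fin (n + 1) → F, LinearIndependent K a := by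
    let B := Module.Basis.ofVectorSpace K F
    have hinf : Infinite (Module.Basis.ofVectorSpaceIndex K F) := by
      by_contra hni
      rw [not_infinite_iff_finite] at hni
      exact hfin (Module.Finite.of_basis B)
    exact ⟨fun i => B (Infinite.natEmbedding _ (i : ℕ)),
      B.linearIndependent.comp (fun i : Fin (n + 1) => Infinite.natEmbedding _ (i : ℕ))
        (fun i j hij => Fin.ext ((Infinite.natEmbedding _).injective hij))⟩
  have hXK : ∀ x ∈ X, x ∈ K := fun x hx => Subfield.subset_closure hx
  have hinj : ∀ x y : Fin (n + 1) → F, (∀ i, x i ∈ X) → (∀ i, y i ∈ X) →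
      ∑ i, a i * x i = ∑ i, a i * y i → ∀ i, x i = y i := by
    intro x y hx hy hxy i
    have h := Fintype.linearIndependent_iff.1 ha
      (fun i => (⟨x i, hXK _ (hx i)⟩ - ⟨y i, hXK _ (hy i)⟩ : K)) (by
        have : ∑ i, (x i - y i) * a i = 0 := by
          simp only [sub_mul, Finset.sum_sub_distrib]
          rw [sub_eq_zero]
          simpa only [mul_comm] using hxy
        simpa [Subfield.smul_def] using this) i
    have := congrArg Subtype.val h
    simpa [sub_eq_zero] using this
  let c : ℕ ↪ X := hXinf.natEmbedding
  have hpat : IsInpPattern L F (Fin (n + 1)) 1 := by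
    choose m φ b hφ using fun α => exists_formula_of_definable _
      (definable_row hadd hmul X hX (n + 1) a α)
    refine ⟨m, φ, fun _ => 2, fun α i => b α (c i), fun _ => by norm_num, ?_, ?_⟩
    · rintro α ⟨x, s, hs, hx⟩
      obtain ⟨i, hi, j, hj, hij⟩ := Finset.one_lt_card.1 hs
      obtain ⟨y, hy, hy1, hy2⟩ := (hφ α x _).1 (hx i hi)
      obtain ⟨z, hz, hz1, hz2⟩ := (hφ α x _).1 (hx j hj)
      have h := hinj y z hy hz (hy1.trans hz1.symm) α
      apply hij
      apply c.injective
      apply Subtype.ext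
      exact hy2.symm.trans (h.trans hz2)
    · intro η S
      refine ⟨fun _ => ∑ i, a i * (c (η i) : F), fun α _ => ?_⟩
      rw [hφ]
      exact ⟨fun i => c (η i), fun i => (c (η i)).2, rfl, rfl⟩
  let N : FirstOrder.Language.Theory.ModelType.{u, v, w} (L.completeTheory F) :=
    FirstOrder.Language.Theory.ModelType.of (L.completeTheory F) F
  refine ⟨FirstOrder.Language.Theory.ModelType.ulift.{u, v, w, max u v} N, ?_⟩
  letI : L.Structure (ULift.{max u v, w} F) :=
    (Equiv.ulift.{max u v, w}.symm : F ≃ _).inducedStructure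
  exact IsInpPattern.of_equiv (L := L) (M := F) (N := ULift.{max u v, w} F)
    (Equiv.inducedStructureEquiv (L := L) (Equiv.ulift.{max u v, w}.symm : F ≃ _)) hpat
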